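/- Let E : P_{μ₀}(ℝ^d) → ℝ ∪ {∞} be proper, coercive, lower semicontinuous, and λ-convex along generalized geodesics with λ ≥ 0, assume E attains its minimum at μ̄, and for τ > 0 set λ_τ := λ/(1+λτ). Then for all μ in the W₂-closure of D(E) the HWI inequality holds: E_τ(μ) − E_τ(μ̄) ≤ |∇_W E_τ|(μ) · W₂(μ, μ̄) − (λ_τ/2) W₂²(μ, μ̄), where |∇_W E_τ|(μ) denotes the metric slope of E_τ at μ. -/

import Mathlib

/-!
The Moreau–Yosida regularization is (almost) convex along the interpolation from `μ` to `μ̄`,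
and this alone gives the inequality, without proximal points.

Fix `α ∈ (0,1)` and let `ν` be `α²`-optimal in the infimum defining `E_τ(μ)`. Take the
generalized geodesic from `ν` to `μ̄` with base `μ`, carried by a 3-plan `𝛍`, and put
`μ_α := ((1-α)π₁ + απ₃)#𝛍`, `ν_α := ((1-α)π₂ + απ₃)#𝛍`. Then
`W₂(μ, μ_α) ≤ α W₂(μ, μ̄)` and `W₂(μ_α, ν_α) ≤ (1-α) W₂(μ, ν)`, so testing `E_τ(μ_α)` with `ν_α`
and using convexity of `E` gives
`E_τ(μ) - E_τ(μ_α) ≥ α (E_τ(μ) - E(μ̄) + (1-α)(W₂²(μ,ν)/(2τ) + (λ/2)∫|x₂-x₃|² d𝛍) - α)`.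
The elementary inequality `λ_τ |x₁-x₃|² ≤ |x₁-x₂|²/τ + λ |x₂-x₃|²` bounds the inner bracket below
by `(λ_τ/2) W₂²(μ, μ̄)` (`exists_descent`). Dividing by `W₂(μ, μ_α)` and letting `α → 0`
bounds the slope of `E_τ` at `μ` from below (`le_slopeW`).

Membership of `μ_α` and `ν_α` in `P_{μ₀}` rests on the gluing of plans (`W2sq_ne_top_trans`).
-/


open MeasureTheory Filter ENNReal

noncomputable section

/-- Euclidean space `ℝ^d`. -/
abbrev Euc (d : ℕ) := EuclideanSpace ℝ (Fin d)

/-- The squared 2-Wasserstein distance, as an extended nonnegative real: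
the infimum over couplings `γ` (Borel probability measures on `ℝ^d × ℝ^d`
with first marginal `μ` and second marginal `ν`) of `∫ |x-y|² dγ`. -/
noncomputable def W2sq {d : ℕ} (μ ν : Measure (Euc d)) : ℝ≥0∞ :=
  ⨅ (γ : Measure (Euc d × Euc d)) (_ : γ.map Prod.fst = μ ∧ γ.map Prod.snd = ν),
    ∫⁻ q, ENNReal.ofReal (‖q.1 - q.2‖ ^ 2) ∂γ

/-- The 2-Wasserstein distance (a real number; degenerate when `W2sq = ∞`). -/
noncomputable def W2 {d : ℕ} (μ ν : Measure (Euc d)) : ℝ :=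
  Real.sqrt (W2sq μ ν).toReal

/-- `γ` is an optimal transport plan from `μ` to `ν`. -/
def IsOptimalPlan {d : ℕ} (μ ν : Measure (Euc d)) (γ : Measure (Euc d × Euc d)) : Prop :=
  γ.map Prod.fst = μ ∧ γ.map Prod.snd = ν ∧
    ∫⁻ q, ENNReal.ofReal (‖q.1 - q.2‖ ^ 2) ∂γ = W2sq μ ν

/-- `P_{μ₀}(ℝ^d)`: Borel probability measures at finite `W₂`-distance from `μ₀`. -/
def Pfin {d : ℕ} (μ₀ : Measure (Euc d)) : Set (Measure (Euc d)) :=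
  {μ | IsProbabilityMeasure μ ∧ W2sq μ₀ μ ≠ ⊤}

/-- `E` is proper: its domain inside `P_{μ₀}` is nonempty (and `E` never takes the value `-∞`,
i.e. it maps into `ℝ ∪ {∞}`). -/
def ProperFn {d : ℕ} (μ₀ : Measure (Euc d)) (F : Measure (Euc d) → EReal) : Prop :=
  (∀ ρ, F ρ ≠ ⊥) ∧ ∃ ρ ∈ Pfin μ₀, F ρ ≠ ⊤

/-- The domain `D(E)` of `E`. -/
def Dom {d : ℕ} (μ₀ : Measure (Euc d)) (F : Measure (Euc d) → EReal) : Set (Measure (Euc d)) :=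
  {μ ∈ Pfin μ₀ | F μ ≠ ⊤}

/-- `E` is coercive: for some `τ₀ > 0`,
`inf_ν { W₂²(μ₀,ν)/(2τ₀) + E(ν) } > -∞`. -/
def CoerciveFn {d : ℕ} (μ₀ : Measure (Euc d)) (F : Measure (Euc d) → EReal) : Prop :=
  ∃ τ₀ : ℝ, 0 < τ₀ ∧
    ⊥ < ⨅ ν ∈ Pfin μ₀, (((W2 μ₀ ν) ^ 2 / (2 * τ₀) : ℝ) : EReal) + F ν

/-- `E` is sequentially lower semicontinuous with respect to `W₂`-convergence. -/
def W2LSC {d : ℕ} (μ₀ : Measure (Euc d)) (F : Measure (Euc d) → EReal) : Prop :=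
  ∀ (s : ℕ → Measure (Euc d)) (μ : Measure (Euc d)),
    (∀ n, s n ∈ Pfin μ₀) → μ ∈ Pfin μ₀ →
    Tendsto (fun n => W2 (s n) μ) atTop (nhds 0) →
    F μ ≤ liminf (fun n => F (s n)) atTop

/-- `E` is `λ`-convex along generalized geodesics: for all `μ₁, μ₂, μ₃ ∈ P_{μ₀}` there
is a 3-plan whose (1,2)- and (1,3)-marginals are optimal, along whose induced interpolating
curve the `λ`-convexity inequality (with the full transport cost `∫|x₂-x₃|² d𝛍`) holds. -/
def GenGeoConvex {d : ℕ} (μ₀ : Measure (Euc d)) (lam : ℝ)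
    (F : Measure (Euc d) → EReal) : Prop :=
  ∀ μ₁ ∈ Pfin μ₀, ∀ μ₂ ∈ Pfin μ₀, ∀ μ₃ ∈ Pfin μ₀,
    ∃ pl : Measure (Euc d × Euc d × Euc d),
      IsOptimalPlan μ₁ μ₂ (pl.map (fun q => (q.1, q.2.1))) ∧
      IsOptimalPlan μ₁ μ₃ (pl.map (fun q => (q.1, q.2.2))) ∧
      ∀ α ∈ Set.Icc (0:ℝ) 1,
        F (pl.map (fun q => (1 - α) • q.2.1 + α • q.2.2)) ≤
          ((1 - α : ℝ) : EReal) * F μ₂ + (α : EReal) * F μ₃ -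
            ((α * (1 - α) * (lam / 2) *
              (∫⁻ q, ENNReal.ofReal (‖q.2.1 - q.2.2‖ ^ 2) ∂pl).toReal : ℝ) : EReal)

/-- The `W₂`-closure (within `P_{μ₀}`) of a set of measures. -/
def W2Closure {d : ℕ} (μ₀ : Measure (Euc d)) (S : Set (Measure (Euc d))) :
    Set (Measure (Euc d)) :=
  {μ ∈ Pfin μ₀ | ∃ s : ℕ → Measure (Euc d), (∀ n, s n ∈ S) ∧
    Tendsto (fun n => W2 (s n) μ) atTop (nhds 0)}

/-- The Moreau–Yosida regularization `E_τ`. -/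
noncomputable def MY {d : ℕ} (μ₀ : Measure (Euc d)) (F : Measure (Euc d) → EReal)
    (τ : ℝ) (μ : Measure (Euc d)) : EReal :=
  ⨅ ν ∈ Pfin μ₀, (((W2 μ ν) ^ 2 / (2 * τ) : ℝ) : EReal) + F ν

/-- `ν` is a proximal point of `μ` for `E` with step `τ`: it minimizes
`ρ ↦ W₂²(μ,ρ)/(2τ) + E(ρ)` over `P_{μ₀}`. -/
def IsProximal {d : ℕ} (μ₀ : Measure (Euc d)) (F : Measure (Euc d) → EReal)
    (τ : ℝ) (μ ν : Measure (Euc d)) : Prop :=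
  ν ∈ Pfin μ₀ ∧ ∀ ρ ∈ Pfin μ₀,
    (((W2 μ ν) ^ 2 / (2 * τ) : ℝ) : EReal) + F ν ≤
      (((W2 μ ρ) ^ 2 / (2 * τ) : ℝ) : EReal) + F ρ

/-- The positive part of an extended real, as an element of `[0,∞]`. -/
noncomputable def ERealPos (x : EReal) : ℝ≥0∞ :=
  if x = ⊤ then ⊤ else ENNReal.ofReal x.toReal

/-- The filter of `W₂`-punctured neighborhoods of `μ` within `P_{μ₀}`. -/
def W2nhdsWithin {d : ℕ} (μ₀ μ : Measure (Euc d)) : Filter (Measure (Euc d)) :=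
  ⨅ ε ∈ Set.Ioi (0:ℝ), Filter.principal {ν | ν ∈ Pfin μ₀ ∧ ν ≠ μ ∧ W2 μ ν < ε}

/-- The metric slope `|∇_W F|(μ) = limsup_{ν → μ} (F(μ)-F(ν))⁺ / W₂(μ,ν)`,
valued in `[0,∞]`. -/
noncomputable def slopeW {d : ℕ} (μ₀ : Measure (Euc d)) (F : Measure (Euc d) → EReal)
    (μ : Measure (Euc d)) : ℝ≥0∞ :=
  Filter.limsup (fun ν => ERealPos (F μ - F ν) / ENNReal.ofReal (W2 μ ν))
    (W2nhdsWithin μ₀ μ)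

/-- `Λ_τ(μ,ν) = W₂²(μ,ν) + (τ²/2)|∇_W E|(μ)² + (τ²/2)|∇_W E|(ν)²`, valued in `[0,∞]`. -/
noncomputable def LamT {d : ℕ} (μ₀ : Measure (Euc d)) (F : Measure (Euc d) → EReal)
    (τ : ℝ) (μ ν : Measure (Euc d)) : ℝ≥0∞ :=
  W2sq μ ν + ENNReal.ofReal (τ ^ 2 / 2) * (slopeW μ₀ F μ) ^ 2
    + ENNReal.ofReal (τ ^ 2 / 2) * (slopeW μ₀ F ν) ^ 2

/-! ### Couplings, gluing and finiteness of `W₂` -/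

/-- Two maps from a common measure space induce a coupling of their push-forwards. -/
lemma W2sq_map_le {d : ℕ} {Ω : Type*} [MeasurableSpace Ω] (m : Measure Ω) {f g : Ω → Euc d}
    (hf : Measurable f) (hg : Measurable g) :
    W2sq (m.map f) (m.map g) ≤ ∫⁻ w, ENNReal.ofReal (‖f w - g w‖ ^ 2) ∂m := by
  refine (iInf₂_le (m.map (fun w => (f w, g w))) ⟨?_, ?_⟩).trans ?_
  · rw [lintegral_map (by fun_prop) (by fun_prop)]
  · rw [Measure.map_map measurable_fst (by fun_prop)]; rfl
  · rw [Measure.map_map measurable_snd (by fun_prop)]; rfl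

lemma exists_coupling_of_ne_top {d : ℕ} {μ ν : Measure (Euc d)} (h : W2sq μ ν ≠ ⊤) :
    ∃ γ : Measure (Euc d × Euc d), γ.map Prod.fst = μ ∧ γ.map Prod.snd = ν ∧
      ∫⁻ q, ENNReal.ofReal (‖q.1 - q.2‖ ^ 2) ∂γ ≠ ⊤ := by
  have h' := lt_top_iff_ne_top.2 h
  simp only [W2sq, iInf_lt_iff] at h'
  obtain ⟨γ, ⟨h1, h2⟩, h3⟩ := h'
  exact ⟨γ, h1, h2, h3.ne⟩

lemma W2sq_comm_le {d : ℕ} (μ ν : Measure (Euc d)) : W2sq ν μ ≤ W2sq μ ν := by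
  refine le_iInf₂ fun γ hγ => ?_
  obtain ⟨rfl, rfl⟩ := hγ
  refine (W2sq_map_le γ measurable_snd measurable_fst).trans (le_of_eq ?_)
  simp only [norm_sub_rev]

/-- Integration of a pointwise bound `c|f|² ≤ a|g|² + b|h|²`. -/
lemma lintegral_sq_le {d : ℕ} {Ω : Type*} [MeasurableSpace Ω] (m : Measure Ω)
    {f g h : Ω → Euc d} (hf : Measurable f) (hg : Measurable g) (hh : Measurable h) {a b c : ℝ}
    (ha : 0 ≤ a) (hb : 0 ≤ b) (hc : 0 ≤ c)
    (H : ∀ w, c * ‖f w‖ ^ 2 ≤ a * ‖g w‖ ^ 2 + b * ‖h w‖ ^ 2) :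
    ENNReal.ofReal c * ∫⁻ w, ENNReal.ofReal (‖f w‖ ^ 2) ∂m ≤
      ENNReal.ofReal a * ∫⁻ w, ENNReal.ofReal (‖g w‖ ^ 2) ∂m +
        ENNReal.ofReal b * ∫⁻ w, ENNReal.ofReal (‖h w‖ ^ 2) ∂m := by
  rw [← lintegral_const_mul _ (by fun_prop), ← lintegral_const_mul _ (by fun_prop),
    ← lintegral_const_mul _ (by fun_prop), ← lintegral_add_left (by fun_prop)]
  refine lintegral_mono fun w => ?_
  rw [← ENNReal.ofReal_mul hc, ← ENNReal.ofReal_mul ha, ← ENNReal.ofReal_mul hb,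
    ← ENNReal.ofReal_add (by positivity) (by positivity)]
  exact ENNReal.ofReal_le_ofReal (H w)

lemma lintegral_sq_sub_ne_top {d : ℕ} {Ω : Type*} [MeasurableSpace Ω] (m : Measure Ω)
    {x y z : Ω → Euc d} (hx : Measurable x) (hy : Measurable y) (hz : Measurable z)
    (h1 : ∫⁻ w, ENNReal.ofReal (‖x w - y w‖ ^ 2) ∂m ≠ ⊤)
    (h2 : ∫⁻ w, ENNReal.ofReal (‖x w - z w‖ ^ 2) ∂m ≠ ⊤) :
    ∫⁻ w, ENNReal.ofReal (‖y w - z w‖ ^ 2) ∂m ≠ ⊤ := by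
  have := lintegral_sq_le m (hy.sub hz) (hx.sub hy) (hx.sub hz)
    (a := 2) (b := 2) (c := 1) (by norm_num) (by norm_num) (by norm_num) (by
      intro w
      have h := norm_sub_le (x w - z w) (x w - y w)
      rw [show x w - z w - (x w - y w) = y w - z w by abel] at h
      simp only [Pi.sub_apply]
      nlinarith [norm_nonneg (y w - z w), sq_nonneg (‖x w - z w‖ - ‖x w - y w‖)])
  simp only [Pi.sub_apply, ENNReal.ofReal_one, one_mul] at this
  refine ne_top_of_le_ne_top ?_ this
  exact ENNReal.add_ne_top.2 ⟨ENNReal.mul_ne_top ENNReal.ofReal_ne_top h1,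
    ENNReal.mul_ne_top ENNReal.ofReal_ne_top h2⟩

open ProbabilityTheory in
/-- Gluing: two plans with the same first marginal are marginals of one 3-plan, obtained by
taking the conditional laws independent given the first coordinate. -/
lemma exists_glue {d : ℕ} (γ ρ : Measure (Euc d × Euc d)) [IsProbabilityMeasure γ]
    [IsProbabilityMeasure ρ] (h : γ.map Prod.fst = ρ.map Prod.fst) :
    ∃ m : Measure (Euc d × Euc d × Euc d),
      m.map (fun q => (q.1, q.2.1)) = γ ∧ m.map (fun q => (q.1, q.2.2)) = ρ := by
  refine ⟨γ.fst ⊗ₘ (γ.condKernel ×ₖ ρ.condKernel), ?_, ?_⟩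
  · have := Measure.compProd_map (μ := γ.fst) (κ := γ.condKernel ×ₖ ρ.condKernel)
      (measurable_fst : Measurable (Prod.fst : Euc d × Euc d → Euc d))
    rw [← Kernel.fst_eq, Kernel.fst_prod, Measure.disintegrate] at this
    exact this.symm
  · have := Measure.compProd_map (μ := γ.fst) (κ := γ.condKernel ×ₖ ρ.condKernel)
      (measurable_snd : Measurable (Prod.snd : Euc d × Euc d → Euc d))
    have h' : γ.fst = ρ.fst := h
    rw [← Kernel.snd_eq, Kernel.snd_prod, h', Measure.disintegrate] at this
    rw [h']
    exact this.symm

/-- Finiteness of `W₂` is transitive. -/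
lemma W2sq_ne_top_trans {d : ℕ} {μ ν ρ : Measure (Euc d)} [IsProbabilityMeasure ν]
    (h1 : W2sq μ ν ≠ ⊤) (h2 : W2sq ν ρ ≠ ⊤) : W2sq μ ρ ≠ ⊤ := by
  obtain ⟨γ, hγ1, hγ2, hγ⟩ :=
    exists_coupling_of_ne_top (ne_top_of_le_ne_top h1 (W2sq_comm_le μ ν))
  obtain ⟨σ, hσ1, hσ2, hσ⟩ := exists_coupling_of_ne_top h2
  have : IsProbabilityMeasure γ := by
    have : IsProbabilityMeasure (γ.map Prod.fst) := by rwa [hγ1]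
    exact Measure.isProbabilityMeasure_of_map Prod.fst
  have : IsProbabilityMeasure σ := by
    have : IsProbabilityMeasure (σ.map Prod.fst) := by rwa [hσ1]
    exact Measure.isProbabilityMeasure_of_map Prod.fst
  obtain ⟨m, hm1, hm2⟩ := exists_glue γ σ (hγ1.trans hσ1.symm)
  have e1 : m.map (fun q => q.2.1) = μ := by
    rw [← hγ2, ← hm1, Measure.map_map measurable_snd (by fun_prop)]; rfl
  have e2 : m.map (fun q => q.2.2) = ρ := by
    rw [← hσ2, ← hm2, Measure.map_map measurable_snd (by fun_prop)]; rfl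
  rw [← hm1, lintegral_map (by fun_prop) (by fun_prop)] at hγ
  rw [← hm2, lintegral_map (by fun_prop) (by fun_prop)] at hσ
  rw [← e1, ← e2]
  exact ne_top_of_le_ne_top
    (lintegral_sq_sub_ne_top m (by fun_prop) (by fun_prop) (by fun_prop) hγ hσ)
    (W2sq_map_le m (by fun_prop) (by fun_prop))

lemma W2_sq {d : ℕ} (μ ν : Measure (Euc d)) : W2 μ ν ^ 2 = (W2sq μ ν).toReal :=
  Real.sq_sqrt ENNReal.toReal_nonneg

lemma W2_nonneg {d : ℕ} (μ ν : Measure (Euc d)) : 0 ≤ W2 μ ν := Real.sqrt_nonneg _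

/-! ### Descent of `E_τ` along the interpolation towards `μ̄` -/

/-- `|u+v|² λ_τ ≤ |u|²/τ + λ|v|²`: the constant `λ_τ` is the harmonic combination of
`1/τ` and `λ`. -/
lemma lamTau_mul_sq_le {d : ℕ} {lam τ : ℝ} (hlam : 0 ≤ lam) (hτ : 0 < τ) (u v : Euc d) :
    lam / (1 + lam * τ) * ‖u + v‖ ^ 2 ≤ 1 / τ * ‖u‖ ^ 2 + lam * ‖v‖ ^ 2 := by
  have h1 : ‖u + v‖ ^ 2 ≤ (‖u‖ + ‖v‖) ^ 2 := by gcongr; exact norm_add_le u v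
  have hp : 0 < 1 + lam * τ := by positivity
  refine (mul_le_mul_of_nonneg_left h1 (by positivity)).trans ?_
  rw [← sub_nonneg]
  have : 1 / τ * ‖u‖ ^ 2 + lam * ‖v‖ ^ 2 - lam / (1 + lam * τ) * (‖u‖ + ‖v‖) ^ 2
      = (‖u‖ - lam * τ * ‖v‖) ^ 2 / (τ * (1 + lam * τ)) := by
    field_simp; ring
  rw [this]; positivity

/-- The basic descent estimate: at distance at most `α W₂(μ, μ̄)` from `μ` there is a measure at
which `E_τ` is smaller than `E_τ(μ) = m` by `α (m - E(μ̄) + (λ_τ/2) W₂²(μ, μ̄)) - O(α²)`. -/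
lemma exists_descent {d : ℕ} {μ₀ : Measure (Euc d)} [IsProbabilityMeasure μ₀]
    {F : Measure (Euc d) → EReal} {lam : ℝ}
    (hlam : 0 ≤ lam) (hbot : ∀ ρ, F ρ ≠ ⊥) (hconv : GenGeoConvex μ₀ lam F)
    {μbar : Measure (Euc d)} (hμbar : μbar ∈ Pfin μ₀) {b : ℝ} (hb : F μbar = b)
    {τ : ℝ} (hτ : 0 < τ) {μ : Measure (Euc d)} (hμ : μ ∈ Pfin μ₀) {m : ℝ}
    (hm : MY μ₀ F τ μ = m) {α : ℝ} (h0 : 0 < α) (h1 : α < 1) :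
    ∃ ρ ∈ Pfin μ₀, W2 μ ρ ≤ α * W2 μ μbar ∧
      MY μ₀ F τ ρ ≤ ((m - α * (m - b + lam / (1 + lam * τ) / 2 * W2 μ μbar ^ 2
        - α * (1 + lam / (1 + lam * τ) / 2 * W2 μ μbar ^ 2)) : ℝ) : EReal) := by
  -- an `α²`-minimizer `ν` in the definition of `E_τ(μ)`
  have hlt : MY μ₀ F τ μ < ((m + α ^ 2 : ℝ) : EReal) := by
    rw [hm]; exact_mod_cast lt_add_of_pos_right m (by positivity)
  simp only [MY, iInf_lt_iff] at hlt
  obtain ⟨ν, hν, hνlt⟩ := hlt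
  have hFt : F ν ≠ ⊤ := by
    intro h
    rw [h, EReal.coe_add_top] at hνlt
    exact not_top_lt hνlt
  obtain ⟨e, he⟩ : ∃ e : ℝ, F ν = e := ⟨_, (EReal.coe_toReal hFt (hbot ν)).symm⟩
  rw [he] at hνlt
  have hνlt' : W2 μ ν ^ 2 / (2 * τ) + e < m + α ^ 2 := by exact_mod_cast hνlt
  obtain ⟨pl, ⟨p1, p2, p3⟩, ⟨q1, q2, q3⟩, hF⟩ := hconv μ hμ ν hν μbar hμbar
  have hfin : ∀ ρ ∈ Pfin μ₀, W2sq μ ρ ≠ ⊤ := fun ρ hρ =>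
    W2sq_ne_top_trans (ne_top_of_le_ne_top hμ.2 (W2sq_comm_le μ₀ μ)) hρ.2
  have hA := hfin ν hν
  have hB := hfin μbar hμbar
  have := hμ.1
  have hpl1 : pl.map (fun q => q.1) = μ := by
    rw [← p1, Measure.map_map measurable_fst (by fun_prop)]; rfl
  have : IsProbabilityMeasure pl := by
    have : IsProbabilityMeasure (pl.map (fun q => q.1)) := by rwa [hpl1]
    exact Measure.isProbabilityMeasure_of_map (fun q => q.1)
  rw [lintegral_map (by fun_prop) (by fun_prop)] at p3 q3
  have hC := lintegral_sq_sub_ne_top pl (x := fun q => q.1) (y := fun q => q.2.1)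
    (z := fun q => q.2.2) (by fun_prop) (by fun_prop) (by fun_prop)
    (by rw [p3]; exact hA) (by rw [q3]; exact hB)
  set C := ∫⁻ q, ENNReal.ofReal (‖q.2.1 - q.2.2‖ ^ 2) ∂pl with hCdef
  have hp : 0 < 1 + lam * τ := by positivity
  have hkey : lam / (1 + lam * τ) * W2 μ μbar ^ 2 ≤ 1 / τ * W2 μ ν ^ 2 + lam * C.toReal := by
    have h := lintegral_sq_le pl (f := fun q => q.1 - q.2.2) (g := fun q => q.1 - q.2.1)
      (h := fun q => q.2.1 - q.2.2) (by fun_prop) (by fun_prop) (by fun_prop)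
      (a := 1 / τ) (b := lam) (c := lam / (1 + lam * τ)) (by positivity) hlam (by positivity)
      (fun q => by simpa using lamTau_mul_sq_le hlam hτ (q.1 - q.2.1) (q.2.1 - q.2.2))
    rw [p3, q3, ← hCdef] at h
    have h' := ENNReal.toReal_mono (ENNReal.add_ne_top.2
      ⟨ENNReal.mul_ne_top ENNReal.ofReal_ne_top hA,
        ENNReal.mul_ne_top ENNReal.ofReal_ne_top hC⟩) h
    rw [ENNReal.toReal_add (ENNReal.mul_ne_top ENNReal.ofReal_ne_top hA)
        (ENNReal.mul_ne_top ENNReal.ofReal_ne_top hC), ENNReal.toReal_mul, ENNReal.toReal_mul,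
      ENNReal.toReal_mul, ENNReal.toReal_ofReal (by positivity),
      ENNReal.toReal_ofReal (by positivity), ENNReal.toReal_ofReal hlam] at h'
    rwa [W2_sq, W2_sq]
  set ρ := pl.map (fun q => (1 - α) • q.1 + α • q.2.2) with hρdef
  set σ := pl.map (fun q => (1 - α) • q.2.1 + α • q.2.2) with hσdef
  have hρσ : W2sq ρ σ ≤ ENNReal.ofReal ((1 - α) ^ 2) * W2sq μ ν := by
    refine (W2sq_map_le pl (by fun_prop) (by fun_prop)).trans (le_of_eq ?_)
    rw [← p3, ← lintegral_const_mul _ (by fun_prop)]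
    refine lintegral_congr fun q => ?_
    rw [← ENNReal.ofReal_mul (by positivity), add_sub_add_right_eq_sub, ← smul_sub, norm_smul,
      mul_pow, Real.norm_eq_abs, sq_abs]
  have hμρ : W2sq μ ρ ≤ ENNReal.ofReal (α ^ 2) * W2sq μ μbar := by
    rw [← hpl1]
    refine (W2sq_map_le pl (by fun_prop) (by fun_prop)).trans (le_of_eq ?_)
    rw [hpl1, ← q3, ← lintegral_const_mul _ (by fun_prop)]
    refine lintegral_congr fun q => ?_
    have : q.1 - ((1 - α) • q.1 + α • q.2.2) = α • (q.1 - q.2.2) := by module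
    rw [← ENNReal.ofReal_mul (by positivity), this, norm_smul,
      mul_pow, Real.norm_eq_abs, sq_abs]
  have fρσ := ENNReal.mul_ne_top (ENNReal.ofReal_ne_top (r := (1 - α) ^ 2)) hA
  have fμρ := ENNReal.mul_ne_top (ENNReal.ofReal_ne_top (r := α ^ 2)) hB
  have pρ : IsProbabilityMeasure ρ := Measure.isProbabilityMeasure_map (by fun_prop)
  have pσ : IsProbabilityMeasure σ := Measure.isProbabilityMeasure_map (by fun_prop)
  have hρ : ρ ∈ Pfin μ₀ := ⟨pρ, W2sq_ne_top_trans hμ.2 (ne_top_of_le_ne_top fμρ hμρ)⟩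
  have hσ : σ ∈ Pfin μ₀ := ⟨pσ, W2sq_ne_top_trans hρ.2 (ne_top_of_le_ne_top fρσ hρσ)⟩
  have dρσ : W2 ρ σ ^ 2 ≤ (1 - α) ^ 2 * W2 μ ν ^ 2 := by
    have := ENNReal.toReal_mono fρσ hρσ
    rwa [ENNReal.toReal_mul, ENNReal.toReal_ofReal (by positivity), ← W2_sq, ← W2_sq] at this
  refine ⟨ρ, hρ, ?_, ?_⟩
  · have := ENNReal.toReal_mono fμρ hμρ
    rw [ENNReal.toReal_mul, ENNReal.toReal_ofReal (by positivity), ← W2_sq, ← W2_sq,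
      ← mul_pow] at this
    exact le_of_sq_le_sq this (mul_nonneg h0.le (W2_nonneg _ _))
  · have hFσ := hF α ⟨h0.le, h1.le⟩
    rw [he, hb] at hFσ
    refine (iInf₂_le σ hσ).trans ((add_le_add_right hFσ _).trans ?_)
    norm_cast
    have e1 : W2 ρ σ ^ 2 / (2 * τ) ≤ (1 - α) ^ 2 * (W2 μ ν ^ 2 / (2 * τ)) := by
      rw [← mul_div_assoc]; gcongr
    have e2 : 1 / τ * W2 μ ν ^ 2 = 2 * (W2 μ ν ^ 2 / (2 * τ)) := by field_simp
    have e3 : lam / (1 + lam * τ) / 2 * W2 μ μbar ^ 2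
        = (lam / (1 + lam * τ) * W2 μ μbar ^ 2) / 2 := by ring
    rw [e2] at hkey
    rw [e3]
    have s1 := mul_le_mul_of_nonneg_left hkey (mul_nonneg h0.le (sub_nonneg.2 h1.le))
    have s2 := mul_le_mul_of_nonneg_left hνlt'.le (sub_nonneg.2 h1.le)
    have s3 : 0 ≤ α ^ 3 := by positivity
    linarith

/-! ### Slope bound and conclusion -/

/-- If near `μ` the functional `G` drops by `α c - O(α²)` within distance `α w`, then its slope
at `μ` is at least `c / w`. -/
lemma le_slopeW {d : ℕ} {μ₀ μ : Measure (Euc d)} {G : Measure (Euc d) → EReal} {m c K w : ℝ}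
    (hG : G μ = m) (hGbot : ∀ ρ ∈ Pfin μ₀, G ρ ≠ ⊥) (hc : 0 < c) (hw : 0 < w)
    (H : ∀ α : ℝ, 0 < α → α < 1 → ∃ ρ ∈ Pfin μ₀, W2 μ ρ ≤ α * w ∧
      G ρ ≤ ((m - α * (c - α * K) : ℝ) : EReal)) :
    ENNReal.ofReal (c / w) ≤ slopeW μ₀ G μ := by
  choose! u hu1 hu2 hu3 using H
  have hev : ∀ᶠ α : ℝ in nhdsWithin 0 (Set.Ioi 0), 0 < α ∧ α < 1 ∧ 0 < c - α * K := by
    have t : Tendsto (fun α : ℝ => c - α * K) (nhds 0) (nhds (c - 0 * K)) :=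
      Continuous.tendsto (by fun_prop) 0
    rw [zero_mul, sub_zero] at t
    filter_upwards [self_mem_nhdsWithin, nhdsWithin_le_nhds (Iio_mem_nhds one_pos),
      nhdsWithin_le_nhds (t.eventually (lt_mem_nhds hc))] with α a1 a2 a3
    exact ⟨a1, a2, a3⟩
  have hlt : ∀ α : ℝ, 0 < α → α < 1 → 0 < c - α * K → G (u α) < G μ := by
    intro α a1 a2 a3
    refine (hu3 α a1 a2).trans_lt ?_
    rw [hG]
    exact_mod_cast sub_lt_self m (mul_pos a1 a3)
  have htend : Tendsto u (nhdsWithin 0 (Set.Ioi 0)) (W2nhdsWithin μ₀ μ) := by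
    simp only [W2nhdsWithin, tendsto_iInf, tendsto_principal]
    intro ε hε
    have t : Tendsto (fun α : ℝ => α * w) (nhds 0) (nhds (0 * w)) :=
      Continuous.tendsto (by fun_prop) 0
    rw [zero_mul] at t
    filter_upwards [hev, nhdsWithin_le_nhds (t.eventually (gt_mem_nhds hε))]
      with α ⟨a1, a2, a3⟩ a4
    refine ⟨hu1 α a1 a2, ?_, (hu2 α a1 a2).trans_lt a4⟩
    intro h
    exact (hlt α a1 a2 a3).ne (by rw [h])
  have hlim : Tendsto (fun α : ℝ => ENNReal.ofReal ((c - α * K) / w))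
      (nhdsWithin 0 (Set.Ioi 0)) (nhds (ENNReal.ofReal (c / w))) := by
    refine ENNReal.tendsto_ofReal (tendsto_nhdsWithin_of_tendsto_nhds ?_)
    have t : Tendsto (fun α : ℝ => (c - α * K) / w) (nhds 0) (nhds ((c - 0 * K) / w)) :=
      Continuous.tendsto (by fun_prop) 0
    simpa using t
  rw [slopeW, limsup_eq]
  refine le_sInf fun a ha => ?_
  refine le_of_tendsto hlim ?_
  filter_upwards [hev, htend.eventually ha] with α ⟨a1, a2, a3⟩ a4
  refine le_trans ?_ a4
  obtain ⟨g, hg⟩ : ∃ g : ℝ, G (u α) = g :=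
    ⟨_, (EReal.coe_toReal (ne_top_of_lt (hlt α a1 a2 a3)) (hGbot _ (hu1 α a1 a2))).symm⟩
  have h3 := hu3 α a1 a2
  rw [hg, EReal.coe_le_coe_iff] at h3
  have hpos : ERealPos (G μ - G (u α)) = ENNReal.ofReal (m - g) := by
    rw [hG, hg, ← EReal.coe_sub, ERealPos, if_neg (EReal.coe_ne_top _), EReal.toReal_coe]
  rw [hpos]
  calc ENNReal.ofReal ((c - α * K) / w)
      = ENNReal.ofReal (α * (c - α * K)) / ENNReal.ofReal (α * w) := by
        rw [← ENNReal.ofReal_div_of_pos (by positivity), mul_div_mul_left _ _ a1.ne']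
    _ ≤ ENNReal.ofReal (m - g) / ENNReal.ofReal (W2 μ (u α)) :=
        ENNReal.div_le_div (ENNReal.ofReal_le_ofReal (by linarith))
          (ENNReal.ofReal_le_ofReal (hu2 α a1 a2))

/-- **HWI inequality for the Moreau–Yosida regularization** (Theorem 1.2, second part).
Under the hypotheses of Theorem 1.1, with `λ_τ := λ/(1+λτ)`, for all `μ` in the
`W₂`-closure of `D(E)`:
`E_τ(μ) - E_τ(μ̄) ≤ |∇_W E_τ|(μ) · W₂(μ,μ̄) - (λ_τ/2) W₂²(μ,μ̄)`,
where `|∇_W E_τ|(μ)` is the metric slope of `E_τ` at `μ`. -/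
theorem moreauYosida_HWI
    {d : ℕ} (μ₀ : Measure (Euc d)) (hμ₀ : IsProbabilityMeasure μ₀)
    (F : Measure (Euc d) → EReal) (lam : ℝ) (hlam : 0 ≤ lam)
    (hproper : ProperFn μ₀ F) (hcoer : CoerciveFn μ₀ F) (hlsc : W2LSC μ₀ F)
    (hconv : GenGeoConvex μ₀ lam F)
    (μbar : Measure (Euc d)) (hμbar : μbar ∈ Pfin μ₀)
    (hmin : ∀ ρ ∈ Pfin μ₀, F μbar ≤ F ρ)
    (τ : ℝ) (hτ : 0 < τ)
    (μ : Measure (Euc d)) (hμ : μ ∈ W2Closure μ₀ (Dom μ₀ F)) :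
    MY μ₀ F τ μ - MY μ₀ F τ μbar ≤
      (slopeW μ₀ (MY μ₀ F τ) μ : EReal) * ((W2 μ μbar : ℝ) : EReal) -
        ((((lam / (1 + lam * τ)) / 2) * (W2 μ μbar) ^ 2 : ℝ) : EReal) := by
  have hμ' : μ ∈ Pfin μ₀ := hμ.1
  obtain ⟨hbot, ρ₀, hρ₀, hρ₀t⟩ := hproper
  obtain ⟨b, hb⟩ : ∃ b : ℝ, F μbar = b :=
    ⟨_, (EReal.coe_toReal (ne_top_of_le_ne_top hρ₀t (hmin ρ₀ hρ₀)) (hbot μbar)).symm⟩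
  have hlow : ∀ ρ, (b : EReal) ≤ MY μ₀ F τ ρ := fun ρ => le_iInf₂ fun ν hν => by
    rw [← hb, ← zero_add (F μbar)]
    exact add_le_add (by exact_mod_cast by positivity) (hmin ν hν)
  have hup : ∀ ρ, MY μ₀ F τ ρ ≤ ((W2 ρ μbar ^ 2 / (2 * τ) + b : ℝ) : EReal) := fun ρ => by
    refine (iInf₂_le μbar hμbar).trans (le_of_eq ?_)
    rw [hb, EReal.coe_add]
  have hMbot : ∀ ρ, MY μ₀ F τ ρ ≠ ⊥ := fun ρ h => by
    have := hlow ρ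
    rw [h, le_bot_iff] at this
    exact EReal.coe_ne_bot b this
  have hself : W2 μbar μbar = 0 := by
    have : W2sq μbar μbar = 0 := by
      simpa using W2sq_map_le μbar measurable_id measurable_id
    simp [W2, this]
  have hMbar : MY μ₀ F τ μbar = b :=
    le_antisymm (by simpa [hself] using hup μbar) (hlow μbar)
  obtain ⟨m, hm⟩ : ∃ m : ℝ, MY μ₀ F τ μ = m :=
    ⟨_, (EReal.coe_toReal (ne_top_of_le_ne_top (EReal.coe_ne_top _) (hup μ)) (hMbot μ)).symm⟩
  set w := W2 μ μbar with hw
  set S := slopeW μ₀ (MY μ₀ F τ) μ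
  set L := lam / (1 + lam * τ) / 2 * w ^ 2
  -- with `c` the left side plus the quadratic term, the claim is `c ≤ S * w`
  suffices h : ((m - b + L : ℝ) : EReal) ≤ (S : EReal) * (w : EReal) by
    have := EReal.sub_le_sub h (le_refl (L : EReal))
    rw [← EReal.coe_sub, add_sub_cancel_right] at this
    rwa [hm, hMbar, ← EReal.coe_sub]
  have hw0 : 0 ≤ w := W2_nonneg _ _
  rcases le_or_gt (m - b + L) 0 with hc | hc
  · calc ((m - b + L : ℝ) : EReal) ≤ 0 := by exact_mod_cast hc
      _ ≤ (S : EReal) * (w : EReal) :=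
        mul_nonneg (EReal.coe_ennreal_nonneg S) (by exact_mod_cast hw0)
  · have hwpos : 0 < w := by
      refine hw0.lt_of_ne fun h => ?_
      have h1 := hup μ
      rw [hm, ← hw, ← h, EReal.coe_le_coe_iff] at h1
      have h2 : L = 0 := by simp [L, ← h]
      simp at h1
      linarith
    have hS := le_slopeW (G := MY μ₀ F τ) hm (fun ρ _ => hMbot ρ) hc hwpos
      (fun α h0 h1 => exists_descent hlam hbot hconv hμbar hb hτ hμ' hm h0 h1)
    have hS' : (((m - b + L) / w : ℝ) : EReal) ≤ (S : EReal) := by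
      have := EReal.coe_ennreal_le_coe_ennreal_iff.2 hS
      rwa [EReal.coe_ennreal_ofReal, max_eq_left (by positivity)] at this
    calc ((m - b + L : ℝ) : EReal) = (((m - b + L) / w : ℝ) : EReal) * (w : EReal) := by
          rw [← EReal.coe_mul, div_mul_cancel₀ _ hwpos.ne']
      _ ≤ (S : EReal) * (w : EReal) :=
          mul_le_mul_of_nonneg_right hS' (by exact_mod_cast hw0)
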